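/- Let S be a finite archimedean commutative semigroup with kernel K (so K = e + S where e is the unique idempotent of S, and the Rees quotient S/K is a commutative nilsemigroup). If the nilsemigroup S/K has nilpotency index at most three, then E(S) ≤ D(S) + κ(S) − 1. -/

import Mathlib

namespace EGZ

variable {S : Type}

/-- `rep a n = (n+1)·a`, the (n+1)-fold sum of `a` with itself (defined for semigroups,
where the 0-fold sum is unavailable). -/
def rep [AddCommSemigroup S] (a : S) : ℕ → S
  | 0 => a
  | n + 1 => rep a n + a

/-- The sum of all terms of a sequence (= multiset) over the semigroup `S`, computed in
`WithZero S` (i.e. `S` with an extra identity element `0` adjoined); the empty sequence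
has sum `0`, and a nonempty sequence has sum `↑s` where `s ∈ S` is its genuine sum. -/
def mSum [AddCommSemigroup S] (T : Multiset S) : WithZero S :=
  (T.map (fun s => (s : WithZero S))).sum

/-- `σ(A) = σ(B)`, with the paper's convention: the empty sequence is regarded as having
sum equal to the identity element `e` of `S`, whenever `S` has an identity element. -/
def EqSum [AddCommSemigroup S] (A B : Multiset S) : Prop :=
  mSum A = mSum B ∨
    ∃ e : S, (∀ a : S, e + a = a) ∧
      ((mSum A = 0 ∧ mSum B = (e : WithZero S)) ∨
        (mSum A = (e : WithZero S) ∧ mSum B = 0))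

/-- A sequence `T` over `S` is reducible if some proper subsequence `B` of `T`
satisfies `σ(B) = σ(T)`. -/
def Reducible [AddCommSemigroup S] (T : Multiset S) : Prop :=
  ∃ B : Multiset S, B < T ∧ EqSum B T

/-- The (large) Davenport constant `D(S)`: the smallest `ℓ` such that every sequence over
`S` of length at least `ℓ` is reducible. -/
noncomputable def DavC (S : Type) [AddCommSemigroup S] : ℕ :=
  sInf {ℓ : ℕ | ∀ T : Multiset S, ℓ ≤ Multiset.card T → Reducible T}

/-- The property defining the small Davenport constant: `ℓ` is admissible if for every `m`
and every `c₁, …, c_m ∈ S` there is `J ⊆ [1, m]` with `|J| ≤ ℓ` and `Σ_{j=1}^m c_j = Σ_{j∈J} c_j`. -/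
def SmallDavProp (S : Type) [AddCommSemigroup S] (ℓ : ℕ) : Prop :=
  ∀ (m : ℕ) (c : Fin m → S), ∃ J : Finset (Fin m),
    J.card ≤ ℓ ∧ EqSum (J.val.map c) ((Finset.univ : Finset (Fin m)).val.map c)

/-- The small Davenport constant `d(S)`. -/
noncomputable def smallDavC (S : Type) [AddCommSemigroup S] : ℕ :=
  sInf {ℓ : ℕ | SmallDavProp S ℓ}

/-- The period of an element `a ∈ S`: the least `t > 0` such that `r·a = (r+t)·a`
for some `r > 0`. -/
noncomputable def period [AddCommSemigroup S] (a : S) : ℕ :=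
  sInf {t : ℕ | 0 < t ∧ ∃ k : ℕ, rep a (k + t) = rep a k}

/-- `exp(S)`: the least common multiple of the periods of all elements of `S`. -/
noncomputable def expS (S : Type) [AddCommSemigroup S] [Fintype S] : ℕ :=
  (Finset.univ : Finset S).lcm (fun a => period a)

/-- `κ(S) = ⌈|S| / exp(S)⌉ · exp(S)`. -/
noncomputable def kappa (S : Type) [AddCommSemigroup S] [Fintype S] : ℕ :=
  ((Fintype.card S + expS S - 1) / expS S) * expS S

/-- `E(S)`: the smallest positive integer `ℓ` such that every sequence `T` over `S` of
length at least `ℓ` contains a subsequence `T'` with `|T| - |T'| = κ(S)` and `σ(T') = σ(T)`. -/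
noncomputable def EC (S : Type) [AddCommSemigroup S] [Fintype S] : ℕ :=
  sInf {ℓ : ℕ | 0 < ℓ ∧ ∀ T : Multiset S, ℓ ≤ Multiset.card T →
    ∃ B : Multiset S, B ≤ T ∧ Multiset.card T - Multiset.card B = kappa S ∧ EqSum B T}

end EGZ

/-- A commutative semigroup `S` is archimedean: for any `a, b ∈ S` there exist
`m, n > 0` and `x, y ∈ S` with `m·a = b + x` and `n·b = a + y`
(here `EGZ.rep a m = (m+1)·a`, so `m` ranging over `ℕ` gives all positive multiples). -/
def IsArchimedean (S : Type) [AddCommSemigroup S] : Prop :=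
  ∀ a b : S, (∃ m : ℕ, ∃ x : S, EGZ.rep a m = b + x) ∧
    (∃ n : ℕ, ∃ y : S, EGZ.rep b n = a + y)

/-- The `t`-fold sumset `N + ⋯ + N` of a commutative semigroup `N`:
all sums of sequences of exactly `t` elements of `N`. -/
def tFold (N : Type) [AddCommSemigroup N] (t : ℕ) : Set N :=
  {s : N | ∃ T : Multiset N, Multiset.card T = t ∧ EGZ.mSum T = (s : WithZero N)}

/-- The nilpotency index `L(N)`: the least `t > 0` such that the `t`-fold sumset
`N + ⋯ + N` has exactly one element. -/
noncomputable def nilIndex (N : Type) [AddCommSemigroup N] : ℕ :=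
  sInf {t : ℕ | 0 < t ∧ ∃ a : N, tFold N t = {a}}

/-! Adding the idempotent `e` retracts `S` onto its kernel, a group `G`. By Gao's theorem, whose
core is Scherk's lower bound for sumsets, `κ(S)` terms can be removed from `T` so that the remaining
sequence `B` has the same image in `G` as `T`. The sums agree in `S` as soon as `σ(B)` lies in the
kernel, which is automatic when `|B| ≥ 3`, and also when `S = G`. If `S ≠ G` then `D(S) ≥ 3`, so the
only bad case is `|B| = 2` with `D(S) = 3`. There `G` is an elementary 2-group, both terms of `B`
have trivial image in `G`, and every `2z` lies in the kernel. Since `|T| > |S|`, some `z` occurs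
twice in `T`, and `B` can be replaced by `{z, z}`. -/

namespace EGZ

section Monoid

open scoped Pointwise

variable {M : Type*} [AddCommMonoid M]

theorem exists_le_sum_eq_card_lt {n h : ℕ} {T : Multiset M}
    (hpiece : ∀ V ≤ T, n ≤ V.card → ∃ U ≤ V, U ≠ 0 ∧ U.card ≤ h ∧ U.sum = 0) :
    ∃ R ≤ T, R.sum = T.sum ∧ R.card < n ∧ (R = T ∨ n ≤ R.card + h) := by
  induction T using Multiset.strongInductionOn with
  | ih T ih =>
    by_cases hn : T.card < n
    · exact ⟨T, le_rfl, rfl, hn, .inl rfl⟩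
    obtain ⟨U, hU, hU0, hUcard, hUsum⟩ := hpiece T le_rfl (not_lt.1 hn)
    obtain ⟨V, rfl⟩ := Multiset.le_iff_exists_add.1 hU
    have hVlt : V < U + V := lt_add_of_pos_left V (pos_iff_ne_zero.2 hU0)
    obtain ⟨R, hRV, hRsum, hRcard, hR⟩ :=
      ih V hVlt fun V' hV' => hpiece V' (hV'.trans hVlt.le)
    refine ⟨R, hRV.trans hVlt.le, by simp [hRsum, hUsum], hRcard, .inr ?_⟩
    rcases hR with rfl | hR
    · rw [Multiset.card_add] at hn
      lia
    · exact hR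

/-- `D` is at least the Davenport constant of `M`, in the form used for groups: a long sequence
has a nonempty zero-sum subsequence. -/
def IsDavenportBound (M : Type*) [AddCommMonoid M] (D : ℕ) : Prop :=
  ∀ T : Multiset M, D ≤ T.card → ∃ U ≤ T, U ≠ 0 ∧ U.sum = 0

theorem IsDavenportBound.exists_zeroSum_card_lt {M : Type*} [AddCancelCommMonoid M] {D : ℕ}
    (hD : IsDavenportBound M D) (T : Multiset M) : ∃ V ≤ T, V.sum = 0 ∧ T.card < V.card + D := by
  obtain ⟨R, hR, hRsum, hRcard, -⟩ := exists_le_sum_eq_card_lt (h := T.card) (n := D) (T := T)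
    fun V hV hVcard => by
      obtain ⟨U, hU, hU0, hUsum⟩ := hD V hVcard
      exact ⟨U, hU, hU0, Multiset.card_le_card (hU.trans hV), hUsum⟩
  obtain ⟨V, rfl⟩ := Multiset.le_iff_exists_add.1 hR
  refine ⟨V, Multiset.le_add_left _ _, by simpa using hRsum, ?_⟩
  rw [Multiset.card_add]
  lia

variable [DecidableEq M]

/-- The sums of the subsequences of `T` of length at most `h`, the empty one included. -/
def shortSums (h : ℕ) (T : Multiset M) : Finset M :=
  ((T.powerset.filter fun U => U.card ≤ h).map Multiset.sum).toFinset

theorem mem_shortSums {h : ℕ} {T : Multiset M} {c : M} :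
    c ∈ shortSums h T ↔ ∃ U ≤ T, U.card ≤ h ∧ U.sum = c := by
  simp [shortSums, and_assoc]

theorem zero_mem_shortSums (h : ℕ) (T : Multiset M) : 0 ∈ shortSums h T :=
  mem_shortSums.2 ⟨0, zero_le, by simp⟩

theorem shortSums_add_insert_subset (h : ℕ) (T : Multiset M) (A : Finset M) :
    shortSums h T + insert 0 A ⊆ shortSums (h + 1) (T + A.val) := by
  intro c hc
  obtain ⟨x, hx, y, hy, rfl⟩ := Finset.mem_add.1 hc
  obtain ⟨U, hU, hUcard, rfl⟩ := mem_shortSums.1 hx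
  rw [mem_shortSums]
  rcases Finset.mem_insert.1 hy with rfl | hyA
  · exact ⟨U, hU.trans (Multiset.le_add_right _ _), by lia, by simp⟩
  · exact ⟨U + {y}, add_le_add hU (Multiset.singleton_le.2 hyA), by simpa, by simp⟩

end Monoid

section Group

open scoped Pointwise

variable {G : Type*} [AddCommGroup G]

theorem exists_add_notMem {A : Finset G} {b : G} (hA : 0 ∈ A) (hb : -b ∉ A) :
    ∃ a ∈ A, a + b ∉ A := by
  by_contra! hadd
  have hmap : A.map (addRightEmbedding b) = A :=
    Finset.eq_of_subset_of_card_le (by simpa [Finset.map_subset_iff_subset_preimage,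
      Finset.subset_iff] using hadd) (Finset.card_map _).ge
  obtain ⟨a, ha, hab⟩ := Finset.mem_map.1 (hmap.symm ▸ hA)
  exact hb (eq_neg_of_add_eq_zero_left hab ▸ ha)

variable [DecidableEq G]

-- Scherk's theorem: passing to the Dyson transform shrinks `B` and preserves the hypotheses.
theorem card_add_card_le_card_add_add_one {A B : Finset G} (hA : 0 ∈ A) (hB : 0 ∈ B)
    (huniq : ∀ b ∈ B, -b ∈ A → b = 0) : A.card + B.card ≤ (A + B).card + 1 := by
  induction B using Finset.strongInduction generalizing A with
  | H B ih =>
    by_cases hB0 : B = {0}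
    · simp [hB0]
    obtain ⟨b, hb, hb0⟩ : ∃ b ∈ B, b ≠ 0 := by
      by_contra! hzero
      exact hB0 (Finset.eq_singleton_iff_unique_mem.2 ⟨hB, hzero⟩)
    obtain ⟨a, ha, hab⟩ := exists_add_notMem hA fun hbA => hb0 (huniq b hb hbA)
    set X := Finset.addDysonETransform a (A, B) with hX
    have mem_snd {y : G} : y ∈ X.2 ↔ y ∈ B ∧ a + y ∈ A := by
      simp [hX, Finset.mem_neg_vadd_finset_iff]
    have hsnd : X.2 ⊂ B :=
      Finset.ssubset_iff_of_subset Finset.inter_subset_left |>.2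
        ⟨b, hb, fun hbX => hab (mem_snd.1 hbX).2⟩
    have huniqX : ∀ y ∈ X.2, -y ∈ X.1 → y = 0 := by
      intro y hy hyX
      obtain ⟨hyB, hyA⟩ := mem_snd.1 hy
      rcases Finset.mem_union.1 hyX with hyA' | hyB'
      · exact huniq y hyB hyA'
      · obtain ⟨b', hb', hsum⟩ := Finset.mem_vadd_finset.1 hyB'
        have hb'0 : b' = 0 := by
          refine huniq b' hb' ?_
          rwa [show -b' = a + y by rw [vadd_eq_add] at hsum; grind]
        refine huniq y hyB ?_
        rwa [← hsum, hb'0, vadd_eq_add, add_zero]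
    calc A.card + B.card = X.1.card + X.2.card :=
          (Finset.addDysonETransform.card a (A, B)).symm
      _ ≤ (X.1 + X.2).card + 1 :=
          ih X.2 hsnd (Finset.mem_union_left _ hA) (mem_snd.2 ⟨hB, by simpa using ha⟩) huniqX
      _ ≤ (A + B).card + 1 :=
          Nat.succ_le_succ (Finset.card_le_card (Finset.addDysonETransform.subset a (A, B)))

theorem card_lt_card_shortSums {h : ℕ} {T : Multiset G} (hcount : ∀ g, T.count g ≤ h)
    (hzero : ∀ U ≤ T, U ≠ 0 → U.card ≤ h → U.sum ≠ 0) : T.card < (shortSums h T).card := by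
  induction h generalizing T with
  | zero =>
    have hT : T = 0 := Multiset.eq_zero_of_forall_notMem fun g =>
      Multiset.count_eq_zero.1 (Nat.le_zero.1 (hcount g))
    simpa [hT] using ⟨0, zero_mem_shortSums 0 0⟩
  | succ h ih =>
    set A := T.toFinset
    set T' := T - A.val
    have hsplit : T' + A.val = T := Multiset.sub_add_cancel (Multiset.dedup_le T)
    have hT' : T' ≤ T := Multiset.sub_le_self _ _
    have hcount' (g : G) : T'.count g ≤ h := by
      have hg := hcount g
      rw [Multiset.count_sub, Multiset.toFinset_val, Multiset.count_dedup]
      split_ifs with hgT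
      · lia
      · simp [Multiset.count_eq_zero_of_notMem hgT]
    have ihT' : T'.card < (shortSums h T').card :=
      ih hcount' fun U hU hU0 hUcard => hzero U (hU.trans hT') hU0 (by lia)
    have hA0 : 0 ∉ A := fun h0 =>
      hzero {0} (Multiset.singleton_le.2 (Multiset.mem_toFinset.1 h0)) (by simp) (by simp) (by simp)
    have huniq : ∀ y ∈ insert 0 A, -y ∈ shortSums h T' → y = 0 := by
      intro y hy hyT'
      obtain ⟨U, hU, hUcard, hUsum⟩ := mem_shortSums.1 hyT'
      refine (Finset.mem_insert.1 hy).resolve_right fun hyA => ?_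
      refine hzero (U + {y}) ?_ (by simp) (by simpa) (by simp [hUsum])
      rw [← hsplit]
      exact add_le_add hU (Multiset.singleton_le.2 hyA)
    have hscherk := card_add_card_le_card_add_add_one (zero_mem_shortSums h T')
      (Finset.mem_insert_self 0 A) huniq
    have hsub := Finset.card_le_card (shortSums_add_insert_subset h T' A)
    have hTcard : T.card = T'.card + A.card := by rw [← hsplit, Multiset.card_add]; rfl
    rw [Finset.card_insert_of_notMem hA0] at hscherk
    rw [hsplit] at hsub
    lia

theorem exists_zeroSum_card_le [Finite G] {h : ℕ} {T : Multiset G} (hcount : ∀ g, T.count g ≤ h)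
    (hT : Nat.card G ≤ T.card) : ∃ U ≤ T, U ≠ 0 ∧ U.card ≤ h ∧ U.sum = 0 := by
  by_contra! hzero
  cases nonempty_fintype G
  rw [Nat.card_eq_fintype_card] at hT
  exact (card_lt_card_shortSums hcount hzero).not_ge ((Finset.card_le_univ _).trans hT)

theorem exists_zeroSum_card_eq_of_count_le_count_zero [Finite G] {D k : ℕ}
    (hk : Nat.card G ≤ k) (hD : IsDavenportBound G D) {T : Multiset G}
    (hT : D + k ≤ T.card + 1) (hmax : ∀ g, T.count g ≤ T.count 0) :
    ∃ U ≤ T, U.card = k ∧ U.sum = 0 := by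
  set h := T.count 0
  set W := T.filter (· ≠ 0)
  have hsplit : Multiset.replicate h 0 + W = T := by
    rw [← Multiset.filter_eq' T 0]
    exact Multiset.filter_add_not _ _
  have hTcard : h + W.card = T.card := by
    rw [← congrArg Multiset.card hsplit, Multiset.card_add, Multiset.card_replicate]
  obtain ⟨V, hVW, hVsum, hVcard⟩ := hD.exists_zeroSum_card_lt W
  have hcount {V' : Multiset G} (hV' : V' ≤ V) (g : G) : V'.count g ≤ h :=
    (Multiset.count_le_of_le g (hV'.trans (hVW.trans (Multiset.filter_le _ _)))).trans (hmax g)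
  obtain ⟨R, hRV, hRsum, hRcard, hR⟩ := exists_le_sum_eq_card_lt (n := k + 1) (h := h) (T := V)
    fun V' hV' hV'card => exists_zeroSum_card_le (hcount hV') (by lia)
  have hRk : k ≤ R.card + h := by
    rcases hR with rfl | hR <;> lia
  refine ⟨Multiset.replicate (k - R.card) 0 + R, ?_, ?_, by simp [hRsum, hVsum]⟩
  · calc Multiset.replicate (k - R.card) 0 + R ≤ Multiset.replicate h 0 + W :=
          add_le_add ((Multiset.replicate_le_replicate 0).2 (by lia)) (hRV.trans hVW)
      _ = T := hsplit
  · rw [Multiset.card_add, Multiset.card_replicate]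
    lia

end Group

theorem exists_zeroSum_card_eq {G : Type*} [AddCommGroup G] [Finite G] {D k : ℕ}
    (hk : Nat.card G ≤ k) (hexp : ∀ g : G, k • g = 0) (hD : IsDavenportBound G D)
    {T : Multiset G} (hT : D + k ≤ T.card + 1) : ∃ U ≤ T, U.card = k ∧ U.sum = 0 := by
  classical
  cases nonempty_fintype G
  obtain ⟨g₀, -, hg₀⟩ := Finset.exists_max_image Finset.univ T.count ⟨0, Finset.mem_univ (0 : G)⟩
  have hcount (g : G) : (T.map (· - g₀)).count g = T.count (g + g₀) := by
    simpa using Multiset.count_map_eq_count' (· - g₀) T sub_left_injective (g + g₀)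
  obtain ⟨U, hU, hUcard, hUsum⟩ := exists_zeroSum_card_eq_of_count_le_count_zero hk hD
    (T := T.map (· - g₀)) (by simpa using hT)
    fun g => by simpa [hcount] using hg₀ (g + g₀) (Finset.mem_univ _)
  refine ⟨U.map (· + g₀), ?_, by simpa using hUcard, ?_⟩
  · simpa using Multiset.map_le_map (f := (· + g₀)) hU
  · simp [Multiset.sum_map_add, hUsum, hUcard, hexp]

section Sequences

theorem exists_map_eq_of_le_map {α β : Type*} {f : α → β} {U : Multiset β} {T : Multiset α}
    (h : U ≤ T.map f) : ∃ V ≤ T, V.map f = U := by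
  have hU : U ∈ (T.map f).powersetCard U.card := Multiset.mem_powersetCard.2 ⟨h, rfl⟩
  rw [Multiset.powersetCard_map, Multiset.mem_map] at hU
  obtain ⟨V, hV, hVU⟩ := hU
  exact ⟨V, (Multiset.mem_powersetCard.1 hV).1, hVU⟩

theorem exists_le_card_eq {α : Type*} {n : ℕ} {T : Multiset α} (h : n ≤ T.card) :
    ∃ U ≤ T, U.card = n := by
  have hpos : 0 < (T.powersetCard n).card := by
    rw [Multiset.card_powersetCard]
    exact Nat.choose_pos h
  obtain ⟨U, hU⟩ := Multiset.card_pos_iff_exists_mem.1 hpos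
  exact ⟨U, Multiset.mem_powersetCard.1 hU⟩

variable {S : Type} [AddCommSemigroup S]

@[simp]
theorem mSum_cons (a : S) (T : Multiset S) : mSum (a ::ₘ T) = a + mSum T := by
  simp [mSum]

@[simp]
theorem mSum_singleton (a : S) : mSum ({a} : Multiset S) = a := by
  simp [mSum]

@[simp]
theorem mSum_add (A B : Multiset S) : mSum (A + B) = mSum A + mSum B := by
  simp [mSum]

theorem mSum_ne_zero {T : Multiset S} (hT : T ≠ 0) : mSum T ≠ 0 := by
  obtain ⟨a, ha⟩ := Multiset.exists_mem_of_ne_zero hT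
  obtain ⟨U, rfl⟩ := Multiset.exists_cons_of_mem ha
  rw [mSum_cons]
  cases mSum U with
  | zero => simp
  | coe s => exact WithZero.coe_ne_zero (a := a + s)

theorem exists_mSum_eq_coe {T : Multiset S} (hT : T ≠ 0) : ∃ s : S, mSum T = s := by
  obtain ⟨s, hs⟩ := WithZero.ne_zero_iff_exists.1 (mSum_ne_zero hT)
  exact ⟨s, hs.symm⟩

@[simp]
theorem lift_mSum {M : Type*} [AddCommMonoid M] (ψ : S →ₙ+ M) (T : Multiset S) :
    WithZero.lift ψ (mSum T) = (T.map ψ).sum := by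
  simp [mSum, map_multiset_sum, Function.comp_def]

@[simp]
theorem mapAddHom_mSum {Q : Type} [AddCommSemigroup Q] (π : S →ₙ+ Q) (T : Multiset S) :
    WithZero.mapAddHom π (mSum T) = mSum (T.map π) := by
  simp [mSum, map_multiset_sum, Function.comp_def]

theorem map_rep {M : Type*} [AddCommMonoid M] (ψ : S →ₙ+ M) (a : S) (n : ℕ) :
    ψ (rep a n) = (n + 1) • ψ a := by
  induction n with
  | zero => simp [rep]
  | succ n ih => rw [rep, map_add, ih, ← succ_nsmul]

theorem rep_eq_self {e : S} (he : e + e = e) (n : ℕ) : rep e n = e := by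
  induction n with
  | zero => rfl
  | succ n ih => rw [rep, ih, he]

theorem mSum_replicate_eq_self {e : S} (he : e + e = e) {n : ℕ} (hn : 0 < n) :
    mSum (Multiset.replicate n e) = e := by
  induction n, hn using Nat.le_induction with
  | base => simp
  | succ n _ ih => rw [Multiset.replicate_succ, mSum_cons, ih, ← WithZero.coe_add, he]

theorem EqSum.sum_map_eq {M : Type*} [AddCancelCommMonoid M] {A B : Multiset S} (h : EqSum A B)
    (ψ : S →ₙ+ M) : (A.map ψ).sum = (B.map ψ).sum := by
  rw [← lift_mSum, ← lift_mSum]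
  rcases h with h | ⟨e, he, ⟨hA, hB⟩ | ⟨hA, hB⟩⟩
  · rw [h]
  all_goals
    have hψe : ψ e = 0 := by
      rw [← add_eq_left, ← map_add, he]
    simp [hA, hB, hψe]

end Sequences

section DavenportConstant

variable {S : Type} [AddCommSemigroup S]

-- Every subsequence of `T` inherits `hT`, so each further term contributes a new sum.
theorem card_lt_card_mSum_powerset [DecidableEq (WithZero S)] {T : Multiset S}
    (hT : ∀ B < T, mSum B ≠ mSum T) : T.card < ((T.powerset.map mSum).toFinset).card := by
  induction T using Multiset.induction_on with
  | empty => simp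
  | cons a T ih =>
    have hT' : ∀ B < T, mSum B ≠ mSum T := fun B hB h =>
      hT (a ::ₘ B) (Multiset.cons_lt_cons a hB) (by simp [h])
    have hnew : mSum (a ::ₘ T) ∉ (T.powerset.map mSum).toFinset := by
      simp only [Multiset.mem_toFinset, Multiset.mem_map, Multiset.mem_powerset, not_exists,
        not_and]
      exact fun B hB => hT B (hB.trans_lt (Multiset.lt_cons_self T a))
    have hsub : insert (mSum (a ::ₘ T)) (T.powerset.map mSum).toFinset ⊆
        ((a ::ₘ T).powerset.map mSum).toFinset := by
      rw [Multiset.powerset_cons, Multiset.map_add, Multiset.toFinset_add]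
      refine Finset.insert_subset (Finset.mem_union_right _ ?_) Finset.subset_union_left
      exact Multiset.mem_toFinset.2 (Multiset.mem_map_of_mem _
        (Multiset.mem_map_of_mem _ (Multiset.mem_powerset.2 le_rfl)))
    calc (a ::ₘ T).card = T.card + 1 := Multiset.card_cons a T
      _ < (T.powerset.map mSum).toFinset.card + 1 := Nat.succ_lt_succ (ih hT')
      _ = (insert (mSum (a ::ₘ T)) (T.powerset.map mSum).toFinset).card :=
          (Finset.card_insert_of_notMem hnew).symm
      _ ≤ _ := Finset.card_le_card hsub

theorem exists_lt_mSum_eq_of_card_lt [Finite S] {T : Multiset S} (hT : Nat.card S < T.card) :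
    ∃ B < T, mSum B = mSum T := by
  classical
  by_contra! hirr
  have : Finite (WithZero S) := inferInstanceAs (Finite (Option S))
  cases nonempty_fintype (WithZero S)
  have hcard : Fintype.card (WithZero S) = Nat.card S + 1 := by
    rw [← Nat.card_eq_fintype_card]
    exact Finite.card_option
  have := (card_lt_card_mSum_powerset hirr).trans_le (Finset.card_le_univ _)
  lia

theorem reducible_of_davC_le [Finite S] {T : Multiset S} (hT : DavC S ≤ T.card) :
    Reducible T := by
  refine Nat.sInf_mem (s := {ℓ : ℕ | ∀ T : Multiset S, ℓ ≤ T.card → Reducible T})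
    ⟨Nat.card S + 1, fun T hT => ?_⟩ T hT
  obtain ⟨B, hB, hsum⟩ := exists_lt_mSum_eq_of_card_lt hT
  exact ⟨B, hB, .inl hsum⟩

variable (S) in
theorem davC_pos [Finite S] : 0 < DavC S := by
  by_contra! h
  obtain ⟨B, hB, -⟩ := reducible_of_davC_le (T := (0 : Multiset S)) h
  exact not_lt_zero hB

theorem isDavenportBound_davC [Finite S] {M : Type*} [AddCancelCommMonoid M] {ι : M →ₙ+ S}
    {ψ : S →ₙ+ M} (hψι : Function.LeftInverse ψ ι) : IsDavenportBound M (DavC S) := by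
  intro U hU
  obtain ⟨B, hB, hsum⟩ := reducible_of_davC_le (T := U.map ι) (by simpa using hU)
  obtain ⟨V, hV, rfl⟩ := exists_map_eq_of_le_map hB.le
  obtain ⟨W, rfl⟩ := Multiset.le_iff_exists_add.1 hV
  refine ⟨W, Multiset.le_add_left _ _, ?_, ?_⟩
  · rintro rfl
    simp at hB
  · simpa [hψι _] using hsum.sum_map_eq ψ

end DavenportConstant

section Kappa

variable {S : Type} [AddCommSemigroup S]

theorem period_spec [Finite S] (a : S) : 0 < period a ∧ ∃ k, rep a (k + period a) = rep a k := by
  apply Nat.sInf_mem (s := {t : ℕ | 0 < t ∧ ∃ k : ℕ, rep a (k + t) = rep a k})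
  obtain ⟨i, j, hij, h⟩ := Finite.exists_ne_map_eq_of_infinite (rep a)
  wlog hlt : i < j generalizing i j
  · exact this j i hij.symm h.symm (by lia)
  exact ⟨j - i, by lia, i, by rw [Nat.add_sub_cancel' hlt.le, h]⟩

variable [Fintype S]

variable (S) in
theorem expS_pos : 0 < expS S := by
  rw [Nat.pos_iff_ne_zero, expS, Ne, Finset.lcm_eq_zero_iff]
  rintro ⟨a, -, ha⟩
  exact (period_spec a).1.ne' ha

variable (S) in
theorem card_le_kappa : Fintype.card S ≤ kappa S := by
  rw [kappa, ← Nat.ceilDiv_eq_add_pred_div, mul_comm]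
  exact le_smul_ceilDiv (expS_pos S)

variable (S) in
theorem kappa_pos [Nonempty S] : 0 < kappa S :=
  Fintype.card_pos.trans_le (card_le_kappa S)

theorem period_dvd_kappa (a : S) : period a ∣ kappa S :=
  (Finset.dvd_lcm (Finset.mem_univ a)).trans (dvd_mul_left _ _)

theorem kappa_nsmul_eq_zero {M : Type*} [AddCancelCommMonoid M] (ψ : S →ₙ+ M) (a : S) :
    kappa S • ψ a = 0 := by
  obtain ⟨-, k, hk⟩ := period_spec a
  have hperiod : (k + 1) • ψ a + period a • ψ a = (k + 1) • ψ a := by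
    rw [← add_nsmul, ← map_rep, ← hk, map_rep, add_right_comm]
  obtain ⟨c, hc⟩ := period_dvd_kappa a
  rw [hc, mul_nsmul, add_eq_left.1 hperiod, nsmul_zero]

end Kappa

section NilIndex

theorem mSum_eq_of_nilIndex_le {N : Type} [AddCommSemigroup N] {z : N} (hz : ∀ x, z + x = z)
    {n : ℕ} (hn : 0 < n) (hnil : ∀ T : Multiset N, T.card = n → mSum T = z) {T : Multiset N}
    (hT : nilIndex N ≤ T.card) : mSum T = z := by
  have mem_tFold {t : ℕ} (ht : 0 < t) : z ∈ tFold N t :=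
    ⟨_, Multiset.card_replicate t z, mSum_replicate_eq_self (hz z) ht⟩
  obtain ⟨hpos, a, ha⟩ : 0 < nilIndex N ∧ ∃ a, tFold N (nilIndex N) = {a} := by
    refine Nat.sInf_mem (s := {t : ℕ | 0 < t ∧ ∃ a : N, tFold N t = {a}}) ⟨n, hn, z, ?_⟩
    refine Set.eq_singleton_iff_unique_mem.2 ⟨mem_tFold hn, ?_⟩
    rintro q ⟨U, hU, hUq⟩
    exact WithZero.coe_inj.1 (hUq.symm.trans (hnil U hU))
  obtain ⟨U, hUT, hU⟩ := exists_le_card_eq hT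
  obtain ⟨V, rfl⟩ := Multiset.le_iff_exists_add.1 hUT
  have hUsum : mSum U = z := by
    obtain ⟨u, hu⟩ := exists_mSum_eq_coe (Multiset.card_pos.1 (hU ▸ hpos))
    have hua : u = a := Set.mem_singleton_iff.1 (ha.subset ⟨U, hU, hu⟩)
    have hza : z = a := Set.mem_singleton_iff.1 (ha.subset (mem_tFold hpos))
    rw [hu, hua, hza]
  rw [mSum_add, hUsum]
  cases mSum V with
  | zero => exact add_zero _
  | coe v => rw [← WithZero.coe_add, hz]

variable {S Q : Type} [AddCommSemigroup S] [AddCommSemigroup Q] {e : S}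

theorem add_eq_of_add_eq_self (harch : IsArchimedean S) (he : e + e = e) {s d : S}
    (hsd : s + d = s) : e + s = s := by
  have hrep (n : ℕ) : s + rep d n = s := by
    induction n with
    | zero => exact hsd
    | succ n ih => rw [rep, ← add_assoc, ih, hsd]
  obtain ⟨n, x, hx⟩ := (harch d e).1
  calc e + s = e + (s + (e + x)) := by rw [← hx, hrep]
    _ = s + (e + x) := by rw [add_left_comm s, ← add_assoc e e, he]
    _ = s := by rw [← hx, hrep]

theorem add_mSum_of_card_lt [Finite S] (harch : IsArchimedean S) (he : e + e = e) {T : Multiset S}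
    (hT : Nat.card S < T.card) : e + mSum T = mSum T := by
  obtain ⟨B, hB, hsum⟩ := exists_lt_mSum_eq_of_card_lt hT
  obtain ⟨C, rfl⟩ := Multiset.le_iff_exists_add.1 hB.le
  obtain ⟨d, hd⟩ := exists_mSum_eq_coe (T := C) (by rintro rfl; simp at hB)
  obtain ⟨s, hs⟩ := exists_mSum_eq_coe (T := B + C) (by rintro h; simp [h] at hB)
  have hsd : s + d = s := by
    rw [← WithZero.coe_inj, WithZero.coe_add, ← hs, ← hd]
    conv_lhs => rw [← hsum]
    rw [mSum_add]
  rw [hs, ← WithZero.coe_add, add_eq_of_add_eq_self harch he hsd]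

theorem add_mSum_of_nilIndex_le [Finite S] (harch : IsArchimedean S) (he : e + e = e) {π : S →ₙ+ Q}
    (hsurj : Function.Surjective π)
    (hker : ∀ a b, π a = π b ↔ a = b ∨ (e + a = a ∧ e + b = b)) {T : Multiset S}
    (hT : nilIndex Q ≤ T.card) : e + mSum T = mSum T := by
  have hzero (q : Q) : π e + q = π e := by
    obtain ⟨s, rfl⟩ := hsurj q
    rw [← map_add, hker]
    exact .inr ⟨by rw [← add_assoc, he], he⟩
  have hnil (U : Multiset Q) (hU : U.card = Nat.card S + 1) : mSum U = π e := by
    obtain ⟨V, rfl⟩ : ∃ V : Multiset S, V.map π = U :=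
      ⟨U.map (Function.surjInv hsurj), by simp [Function.surjInv_eq hsurj]⟩
    rw [Multiset.card_map] at hU
    obtain ⟨s, hs⟩ := exists_mSum_eq_coe (T := V) (Multiset.card_pos.1 (by lia))
    have hes : e + s = s := by
      simpa [hs, ← WithZero.coe_add] using add_mSum_of_card_lt harch he (T := V) (by lia)
    rw [← mapAddHom_mSum, hs, WithZero.mapAddHom_coe, (hker s e).2 (.inr ⟨hes, he⟩)]
  have hπT : WithZero.mapAddHom π (mSum T) = π e := by
    rw [mapAddHom_mSum]
    exact mSum_eq_of_nilIndex_le hzero (Nat.succ_pos _) hnil (by simpa using hT)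
  cases hs : mSum T with
  | zero => simp [hs] at hπT
  | coe s =>
    rw [hs, WithZero.mapAddHom_coe, WithZero.coe_inj, hker] at hπT
    rw [← WithZero.coe_add]
    rcases hπT with rfl | ⟨hes, -⟩
    · rw [he]
    · rw [hes]

end NilIndex

section Kernel

variable {S : Type} [AddCommSemigroup S]

/-- The kernel `e + S` of a commutative semigroup `S` with idempotent `e`, encoded as the set of
elements fixed by adding `e`. -/
def kernel (e : S) : AddSubsemigroup S where
  carrier := {s | e + s = s}
  add_mem' {a b} (ha : e + a = a) _ := by rw [Set.mem_ofPred_eq, ← add_assoc, ha]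

theorem mem_kernel {e s : S} : s ∈ kernel e ↔ e + s = s := Iff.rfl

theorem add_mem_kernel {e : S} (he : e + e = e) (s : S) : e + s ∈ kernel e := by
  rw [mem_kernel, ← add_assoc, he]

theorem exists_mem_kernel_add_eq {e : S} (harch : IsArchimedean S) (he : e + e = e) (s : S) :
    ∃ t ∈ kernel e, t + s = e := by
  obtain ⟨n, y, hy⟩ := (harch e s).1
  rw [rep_eq_self he] at hy
  exact ⟨e + y, add_mem_kernel he y, by rw [add_assoc, add_comm y, ← hy, he]⟩

/-- The group structure on the kernel of an archimedean commutative semigroup, with zero `e`. -/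
@[reducible]
noncomputable def kernelAddCommGroup {e : S} (harch : IsArchimedean S) (he : e + e = e) :
    AddCommGroup (kernel e) :=
  have hneg (s : S) := exists_mem_kernel_add_eq harch he s
  letI : Zero (kernel e) := ⟨⟨e, he⟩⟩
  letI : Neg (kernel e) := ⟨fun s => ⟨(hneg s).choose, (hneg s).choose_spec.1⟩⟩
  { AddGroup.ofLeftAxioms add_assoc (fun s : kernel e => Subtype.ext s.2)
      (fun s => Subtype.ext (hneg s).choose_spec.2) with
    add_comm }

/-- A presentation of the kernel `e + S` of `S` as the group `G`. The map `proj` stands for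
`s ↦ e + s`, and `e` itself is `incl 0`. -/
structure KernelRetraction (S G : Type*) [AddCommSemigroup S] [AddCommGroup G] where
  proj : S →ₙ+ G
  incl : G →ₙ+ S
  leftInverse : Function.LeftInverse proj incl
  incl_proj (s : S) : incl (proj s) = incl 0 + s

theorem exists_kernelRetraction {e : S} (harch : IsArchimedean S) (he : e + e = e) :
    ∃ (G : Type) (_ : AddCommGroup G) (R : KernelRetraction S G), R.incl 0 = e := by
  let := kernelAddCommGroup harch he
  refine ⟨kernel e, inferInstance, ⟨⟨fun s => ⟨e + s, add_mem_kernel he s⟩, fun a b => ?_⟩,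
    ⟨Subtype.val, fun _ _ => rfl⟩, fun g => Subtype.ext g.2, fun _ => rfl⟩, rfl⟩
  refine Subtype.ext (?_ : e + (a + b) = e + a + (e + b))
  rw [add_add_add_comm, he]

namespace KernelRetraction

variable {G : Type*} [AddCommGroup G] (R : KernelRetraction S G)

theorem coe_incl_sum_map_proj (T : Multiset S) :
    (R.incl (T.map R.proj).sum : WithZero S) = R.incl 0 + mSum T := by
  rw [← lift_mSum]
  cases mSum T with
  | zero => simp
  | coe s => rw [WithZero.lift_coe, R.incl_proj, WithZero.coe_add]

/-- The sequence `T` has its sum in the kernel. The empty sequence does not, since `mSum` gives it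
the adjoined zero as its sum. -/
def InKernel (T : Multiset S) : Prop := R.incl 0 + mSum T = mSum T

variable {R} {A B : Multiset S}

theorem InKernel.congr (hA : R.InKernel A) (h : mSum A = mSum B) : R.InKernel B := by
  rwa [InKernel, ← h]

theorem InKernel.mono (hA : R.InKernel A) (h : A ≤ B) : R.InKernel B := by
  obtain ⟨C, rfl⟩ := Multiset.le_iff_exists_add.1 h
  rw [InKernel, mSum_add, ← add_assoc, hA]

theorem InKernel.mSum_eq (hA : R.InKernel A) (hB : R.InKernel B)
    (h : (A.map R.proj).sum = (B.map R.proj).sum) : mSum A = mSum B := by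
  rw [← hA, ← hB, ← R.coe_incl_sum_map_proj, h, R.coe_incl_sum_map_proj]

theorem inKernel_singleton {s : S} : R.InKernel {s} ↔ R.incl 0 + s = s := by
  rw [InKernel, mSum_singleton, ← WithZero.coe_add, WithZero.coe_inj]

theorem inKernel_singleton_of_add_self {n : ℕ} (hn : ∀ T : Multiset S, n ≤ T.card → R.InKernel T)
    {f : S} (hf : f + f = f) : R.InKernel {f} :=
  (hn (Multiset.replicate (n + 1) f) (by simp)).congr <| by
    rw [mSum_replicate_eq_self hf n.succ_pos, mSum_singleton]

theorem eqSum_of_forall_inKernel (hS : ∀ s, R.InKernel {s}) (hB : B ≠ 0)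
    (h : (A.map R.proj).sum = (B.map R.proj).sum) : EqSum A B := by
  have inKernel_of_ne_zero {C : Multiset S} (hC : C ≠ 0) : R.InKernel C := by
    obtain ⟨c, hc⟩ := Multiset.exists_mem_of_ne_zero hC
    exact (hS c).mono (Multiset.singleton_le.2 hc)
  rcases eq_or_ne A 0 with rfl | hA
  · refine .inr ⟨R.incl 0, fun s => inKernel_singleton.1 (hS s), .inl ⟨rfl, ?_⟩⟩
    rw [← inKernel_of_ne_zero hB, ← R.coe_incl_sum_map_proj, ← h, Multiset.map_zero,
      Multiset.sum_zero]
  · exact .inl ((inKernel_of_ne_zero hA).mSum_eq (inKernel_of_ne_zero hB) h)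

theorem exists_lt_mSum_eq_of_davC_le [Finite S] {n : ℕ}
    (hn : ∀ T : Multiset S, n ≤ T.card → R.InKernel T) {a : S} (ha : ¬ R.InKernel {a})
    {T : Multiset S} (hT : DavC S ≤ T.card) : ∃ C < T, mSum C = mSum T := by
  obtain ⟨C, hC, h | ⟨f, hf, -⟩⟩ := reducible_of_davC_le hT
  · exact ⟨C, hC, h⟩
  · have hfe : R.incl 0 = f := by
      rw [← inKernel_singleton.1 (inKernel_singleton_of_add_self hn (hf f)), add_comm, hf]
    exact absurd (inKernel_singleton.2 (by rw [hfe, hf])) ha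

theorem exists_le_sum_map_proj_eq [Fintype S] {T : Multiset S}
    (hT : DavC S + kappa S ≤ T.card + 1) :
    ∃ B ≤ T, B.card + kappa S = T.card ∧ (B.map R.proj).sum = (T.map R.proj).sum := by
  have : Finite G := Finite.of_injective R.incl R.leftInverse.injective
  have hcard : Nat.card G ≤ kappa S :=
    (Nat.card_le_card_of_injective R.incl R.leftInverse.injective).trans
      (Nat.card_eq_fintype_card (α := S) ▸ card_le_kappa S)
  have hexp (g : G) : kappa S • g = 0 := by
    simpa only [R.leftInverse g] using kappa_nsmul_eq_zero R.proj (R.incl g)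
  obtain ⟨U, hU, hUcard, hUsum⟩ := exists_zeroSum_card_eq hcard hexp
    (isDavenportBound_davC R.leftInverse) (T := T.map R.proj) (by simpa using hT)
  obtain ⟨V, hV, rfl⟩ := exists_map_eq_of_le_map hU
  obtain ⟨B, rfl⟩ := Multiset.le_iff_exists_add.1 hV
  refine ⟨B, Multiset.le_add_left _ _, ?_, by simp [hUsum]⟩
  rw [Multiset.card_add, ← hUcard, Multiset.card_map, add_comm]

theorem two_lt_of_forall_exists_lt_mSum_eq {n d : ℕ}
    (hn : ∀ T : Multiset S, n ≤ T.card → R.InKernel T) {a : S} (ha : ¬ R.InKernel {a})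
    (hd : ∀ T : Multiset S, d ≤ T.card → ∃ C < T, mSum C = mSum T) : 2 < d := by
  by_contra! hd2
  obtain ⟨C, hC, hsum⟩ := hd (Multiset.replicate 2 a) (by simpa using hd2)
  rcases Multiset.le_singleton.1 (Multiset.lt_replicate_succ.1 hC) with rfl | rfl
  · exact mSum_ne_zero (by simp) hsum.symm
  · refine ha (inKernel_singleton_of_add_self hn (WithZero.coe_inj.1 ?_))
    simpa [Multiset.replicate_succ] using hsum.symm

theorem inKernel_replicate_two (h3 : ∀ T : Multiset S, T.card = 3 → R.InKernel T)
    (hd : ∀ T : Multiset S, T.card = 3 → ∃ C < T, mSum C = mSum T) (z : S) :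
    R.InKernel (Multiset.replicate 2 z) := by
  obtain ⟨C, hC, hsum⟩ := hd (Multiset.replicate 3 z) (by simp)
  have hCker : R.InKernel C := (h3 _ (by simp)).congr hsum.symm
  exact hCker.mono (Multiset.lt_replicate_succ.1 hC)

theorem proj_eq_zero_of_not_inKernel (h3 : ∀ T : Multiset S, T.card = 3 → R.InKernel T)
    (hd : ∀ T : Multiset S, T.card = 3 → ∃ C < T, mSum C = mSum T) {x y : S}
    (hxy : ¬ R.InKernel {x, y}) : R.proj x = 0 := by
  obtain ⟨C, hC, hsum⟩ := hd {x, y, y} rfl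
  have hCker : R.InKernel C := (h3 {x, y, y} rfl).congr hsum.symm
  obtain ⟨z, hz⟩ := Multiset.lt_iff_cons_le.1 hC
  have hCxy : ¬ C ≤ {x, y} := fun h => hxy (hCker.mono h)
  have hCyy : C = {y, y} := by
    rcases Multiset.mem_cons.1 (Multiset.mem_of_le hz (Multiset.mem_cons_self z C)) with rfl | hzy
    · have hCle : C ≤ Multiset.replicate 2 y := (Multiset.cons_le_cons_iff z).1 hz
      refine (eq_or_lt_of_le hCle).resolve_right fun hlt => hCxy ?_
      exact (Multiset.lt_replicate_succ.1 hlt).trans (Multiset.le_cons_self {y} z)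
    · obtain rfl : z = y := by simpa using hzy
      rw [Multiset.insert_eq_cons, Multiset.insert_eq_cons, Multiset.cons_swap,
        Multiset.cons_le_cons_iff] at hz
      exact absurd hz hCxy
  simpa [hCyy] using (congrArg (WithZero.lift R.proj) hsum)

theorem add_self_eq_zero_of_forall_exists_lt_mSum_eq (R : KernelRetraction S G)
    (hd : ∀ T : Multiset S, T.card = 3 → ∃ C < T, mSum C = mSum T) (g : G) : g + g = 0 := by
  obtain ⟨C, hC, hsum⟩ := hd (Multiset.replicate 3 (R.incl g)) (by simp)
  obtain ⟨m, hm, rfl⟩ := Multiset.le_replicate_iff.1 (Multiset.lt_replicate_succ.1 hC)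
  have hg : m • g = g + (g + g) := by
    simpa [R.leftInverse g] using congrArg (WithZero.lift R.proj) hsum
  interval_cases m
  · exact absurd hsum.symm (mSum_ne_zero (by simp))
  · simpa using hg
  · have hg0 : g = 0 := by simpa [two_nsmul] using hg
    rw [hg0, add_zero]

theorem exists_inKernel_card_eq_two [Fintype S] (h3 : ∀ T : Multiset S, T.card = 3 → R.InKernel T)
    (hd : ∀ T : Multiset S, T.card = 3 → ∃ C < T, mSum C = mSum T) {T : Multiset S}
    (hT : Fintype.card S < T.card) :
    ∃ B ≤ T, B.card = 2 ∧ R.InKernel B ∧ (B.map R.proj).sum = 0 := by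
  have hdup : ¬ T.Nodup := fun hnodup => by
    classical
    rw [← Multiset.toFinset_card_of_nodup hnodup] at hT
    exact hT.not_ge (Finset.card_le_univ _)
  obtain ⟨z, hz⟩ : ∃ z, Multiset.replicate 2 z ≤ T := by
    by_contra! hz
    exact hdup (Multiset.nodup_iff_le.2 hz)
  exact ⟨_, hz, Multiset.card_replicate 2 z, inKernel_replicate_two h3 hd z, by
    simpa [two_nsmul] using R.add_self_eq_zero_of_forall_exists_lt_mSum_eq hd (R.proj z)⟩

theorem exists_inKernel_sum_map_proj_eq [Fintype S]
    (h3 : ∀ T : Multiset S, 3 ≤ T.card → R.InKernel T) {a : S} (ha : ¬ R.InKernel {a})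
    {T : Multiset S} (hT : DavC S + kappa S ≤ T.card + 1) :
    ∃ B ≤ T, B.card + kappa S = T.card ∧ R.InKernel B ∧
      (B.map R.proj).sum = (T.map R.proj).sum := by
  have hred (U : Multiset S) (hU : DavC S ≤ U.card) : ∃ C < U, mSum C = mSum U :=
    exists_lt_mSum_eq_of_davC_le h3 ha hU
  have hD : 2 < DavC S := two_lt_of_forall_exists_lt_mSum_eq h3 ha hred
  obtain ⟨B, hBT, hBcard, hBsum⟩ := R.exists_le_sum_map_proj_eq hT
  by_cases hB : R.InKernel B
  · exact ⟨B, hBT, hBcard, hB, hBsum⟩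
  have hB3 : B.card < 3 := not_le.1 (mt (h3 B) hB)
  obtain ⟨x, y, rfl⟩ : ∃ x y, B = {x, y} := Multiset.card_eq_two.1 (by lia)
  have h3' (U : Multiset S) (hU : U.card = 3) : R.InKernel U := h3 U hU.ge
  have hd (U : Multiset S) (hU : U.card = 3) : ∃ C < U, mSum C = mSum U := hred U (by lia)
  obtain ⟨B', hB'T, hB'card, hB', hB'sum⟩ := exists_inKernel_card_eq_two (T := T) h3' hd
    ((card_le_kappa S).trans_lt (by lia))
  have hx : R.proj x = 0 := proj_eq_zero_of_not_inKernel h3' hd hB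
  have hy : R.proj y = 0 := proj_eq_zero_of_not_inKernel h3' hd (Multiset.pair_comm x y ▸ hB)
  refine ⟨B', hB'T, by lia, hB', ?_⟩
  rw [hB'sum, ← hBsum]
  simp [hx, hy]

theorem exists_eqSum_of_inKernel [Fintype S] (R : KernelRetraction S G)
    (h3 : ∀ T : Multiset S, 3 ≤ T.card → R.InKernel T) {T : Multiset S}
    (hT : DavC S + kappa S ≤ T.card + 1) :
    ∃ B ≤ T, T.card - B.card = kappa S ∧ EqSum B T := by
  by_cases hS : ∀ s, R.InKernel {s}
  · obtain ⟨B, hBT, hBcard, hBsum⟩ := R.exists_le_sum_map_proj_eq hT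
    have hT0 : T ≠ 0 := by
      rintro rfl
      have : Nonempty S := ⟨R.incl 0⟩
      have hD := davC_pos S
      have hκ := kappa_pos S
      rw [Multiset.card_zero] at hT
      lia
    exact ⟨B, hBT, by lia, eqSum_of_forall_inKernel hS hT0 hBsum⟩
  · push Not at hS
    obtain ⟨a, ha⟩ := hS
    obtain ⟨B, hBT, hBcard, hB, hBsum⟩ := exists_inKernel_sum_map_proj_eq h3 ha hT
    exact ⟨B, hBT, by lia, .inl (hB.mSum_eq (hB.mono hBT) hBsum)⟩

end KernelRetraction

end Kernel

end EGZ

/-- Let `S` be a finite archimedean commutative semigroup with unique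
idempotent `e` and kernel `K = e + S`, and present the Rees quotient nilsemigroup `S/K` as
a finite commutative semigroup `Q` with a surjective additive map `π : S → Q` whose kernel
congruence is the Rees congruence of `K`.  If the nilsemigroup `S/K` has nilpotency index
at most three, then `E(S) ≤ D(S) + κ(S) − 1`. -/
theorem E_le_of_archimedean_nilIndex_le_three (S Q : Type) [AddCommSemigroup S] [Fintype S]
    [AddCommSemigroup Q] [Fintype Q]
    (harch : IsArchimedean S)
    (e : S) (he : e + e = e) (huniq : ∀ f : S, f + f = f → f = e)
    (K : Set S) (hK : K = {s : S | ∃ x : S, s = e + x})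
    (π : S → Q) (hsurj : Function.Surjective π)
    (hhom : ∀ a b : S, π (a + b) = π a + π b)
    (hker : ∀ a b : S, π a = π b ↔ (a = b ∨ (a ∈ K ∧ b ∈ K)))
    (hidx : nilIndex Q ≤ 3) :
    EGZ.EC S ≤ EGZ.DavC S + EGZ.kappa S - 1 := by
  have hmem (s : S) : s ∈ K ↔ e + s = s := by
    rw [hK]
    exact ⟨fun ⟨x, hx⟩ => hx ▸ EGZ.add_mem_kernel he x, fun hs => ⟨s, hs.symm⟩⟩
  simp only [hmem] at hker
  obtain ⟨G, _, R, hR⟩ := EGZ.exists_kernelRetraction harch he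
  have h3 (T : Multiset S) (hT : 3 ≤ T.card) : R.InKernel T := by
    rw [EGZ.KernelRetraction.InKernel, hR]
    exact EGZ.add_mSum_of_nilIndex_le (π := ⟨π, hhom⟩) harch he hsurj hker (hidx.trans hT)
  have : Nonempty S := ⟨e⟩
  have hD := EGZ.davC_pos S
  have hκ := EGZ.kappa_pos S
  exact Nat.sInf_le ⟨by lia, fun T hT => R.exists_eqSum_of_inKernel h3 (by lia)⟩
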